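/- Let a_1 ≥ a_2 ≥ … ≥ a_m be any non-increasing sequence of non-negative integers and let K be a field. Then there exist an integer n and a squarefree monomial ideal I ⊆ S = K[x_1,…,x_n] such that ν(I) = m and g_I(k) = a_k for all k = 1,…,m. -/

import Mathlib

open MvPolynomial

/-- The squarefree monomial `∏ i ∈ F, xᵢ`. -/
noncomputable def sqMon (K : Type) [Field K] {σ : Type} (F : Finset σ) :
    MvPolynomial σ K := ∏ i ∈ F, X i

/-- `I` is a squarefree monomial ideal if it is generated by squarefree monomials. -/
def IsSqfreeMonomialIdeal (K : Type) [Field K] {σ : Type}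
    (I : Ideal (MvPolynomial σ K)) : Prop :=
  ∃ 𝒢 : Set (Finset σ), I = Ideal.span ((sqMon K) '' 𝒢)

/-- The `k`-th squarefree power `I^[k]`: the ideal generated by all squarefree
monomials belonging to `I^k`. -/
noncomputable def sqfreePower (K : Type) [Field K] {σ : Type}
    (I : Ideal (MvPolynomial σ K)) (k : ℕ) : Ideal (MvPolynomial σ K) :=
  Ideal.span {m | ∃ F : Finset σ, m = sqMon K F ∧ m ∈ I ^ k}

/-- The monomial grade `ν(I)`: the largest `k` with `I^[k] ≠ (0)`. -/
noncomputable def monGrade (K : Type) [Field K] {σ : Type}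
    (I : Ideal (MvPolynomial σ K)) : ℕ :=
  sSup {k | sqfreePower K I k ≠ ⊥}

/-- The initial degree of a squarefree monomial ideal: the least degree of a
(squarefree) monomial belonging to it. -/
noncomputable def indeg (K : Type) [Field K] {σ : Type}
    (I : Ideal (MvPolynomial σ K)) : ℕ :=
  sInf {d | ∃ F : Finset σ, F.card = d ∧ sqMon K F ∈ I}

/-- The depth of `S/I` over the polynomial ring `S`: the longest length of a
regular sequence on `S/I` consisting of elements of the irrelevant maximal ideal. -/
noncomputable def polyDepth (K : Type) [Field K] {σ : Type}
    (I : Ideal (MvPolynomial σ K)) : ℕ :=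
  sSup {k | ∃ rs : List (MvPolynomial σ K), rs.length = k ∧
    (∀ r ∈ rs, r ∈ Ideal.span (Set.range (X : σ → MvPolynomial σ K))) ∧
    RingTheory.Sequence.IsRegular (MvPolynomial σ K ⧸ I) rs}

/-- The normalized depth function `g_I(k) = depth(S/I^[k]) - (indeg(I^[k]) - 1)`. -/
noncomputable def nDepth (K : Type) [Field K] {σ : Type}
    (I : Ideal (MvPolynomial σ K)) (k : ℕ) : ℤ :=
  (polyDepth K (sqfreePower K I k) : ℤ) - ((indeg K (sqfreePower K I k) : ℤ) - 1)

/-!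
Squarefree powers see only matchings. If the generators of `I` are the members of a family of
sets, those of `I^[k]` are the unions of `k` disjoint members.

The family consists of `m` colours. A set has colour `j` if it contains the core `B j` and has
at least `s j` elements in a fixed large set `U`; the cores are disjoint and the weights `s j`
grow by steps of at least `#Uᶜ`. A matching of size `k` uses `k` different colours, so either
these are the first `k` colours, or it pays `#Uᶜ` additional elements of `U`. Hence a generator
of `I^[k]` of least degree contains `B 0, …, B (k - 1)` and has exactly `∑ j < k, s j` elements
in `U`, so that `indeg I^[k] = ∑ j < k, (s j + #(B j \ U))`. On the other hand `depth S/I^[k]`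
turns out to be `#Uᶜ + ∑ j < k, s j - 1`. Therefore `g_I(k) = #Uᶜ - ∑ j < k, #(B j \ U)`, and it
remains to let the `#(B j \ U)` be the successive differences of the given sequence.

The depth is bounded above by the dimension of an associated prime, that is, by the size of a
maximal set not in the family. It is bounded below by showing that the complete homogeneous
symmetric polynomials `h₁, …, h_t` form a weakly regular sequence on `S/I^[k]`. They do so on
every quotient of `S` by variables that leaves at least `t` variables, and regularity is carried
over to `S/J` along the exact sequence `0 → S/(J : x) → S/J → S/(J + (x)) → 0`, one variable `x`
at a time.
-/

open RingTheory.Sequence Function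

/-! ### Weakly regular sequences -/

section WeaklyRegular

variable {R : Type*} [CommRing R]

theorem quotSMulTop_map_injective {M₁ M₂ M₃ : Type*} [AddCommGroup M₁] [Module R M₁]
    [AddCommGroup M₂] [Module R M₂] [AddCommGroup M₃] [Module R M₃] {f : M₁ →ₗ[R] M₂}
    {g : M₂ →ₗ[R] M₃} {r : R} (hf : Injective f) (hfg : Exact f g) (hr : IsSMulRegular M₃ r) :
    Injective (QuotSMulTop.map r f) := by
  have hzero : Exact (0 : PUnit →ₗ[R] M₁) f := (LinearMap.exact_zero_iff_injective _ f).mpr hf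
  have := QuotSMulTop.map_first_exact_on_four_term_exact_of_isSMulRegular_last (r := r) hzero hfg hr
  rwa [map_zero, LinearMap.exact_zero_iff_injective] at this

theorem isWeaklyRegular_of_exact {rs : List R} :
    ∀ {M₁ M₂ M₃ : Type*} [AddCommGroup M₁] [Module R M₁] [AddCommGroup M₂] [Module R M₂]
    [AddCommGroup M₃] [Module R M₃] {f : M₁ →ₗ[R] M₂} {g : M₂ →ₗ[R] M₃},
    Injective f → Exact f g → Surjective g →
    IsWeaklyRegular M₁ rs → IsWeaklyRegular M₃ rs → IsWeaklyRegular M₂ rs := by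
  induction rs with
  | nil => intros; exact .nil R _
  | cons r rs ih =>
    intro M₁ M₂ M₃ _ _ _ _ _ _ f g hf hfg hg h₁ h₃
    rw [isWeaklyRegular_cons_iff] at h₁ h₃ ⊢
    exact ⟨isSMulRegular_of_range_eq_ker hf hfg.linearMap_ker_eq.symm h₁.1 h₃.1,
      ih (quotSMulTop_map_injective hf hfg h₃.1) (QuotSMulTop.map_exact r hfg hg)
        (QuotSMulTop.map_surjective r hg) h₁.2 h₃.2⟩

theorem isWeaklyRegular_of_subsingleton (M : Type*) [AddCommGroup M] [Module R M] [Subsingleton M]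
    (rs : List R) : IsWeaklyRegular M rs := by
  induction rs generalizing M with
  | nil => exact .nil R M
  | cons r rs ih =>
    rw [isWeaklyRegular_cons_iff]
    have : Subsingleton (QuotSMulTop r M) := (Submodule.mkQ_surjective _).subsingleton
    exact ⟨fun x y _ => Subsingleton.elim x y, ih _⟩

theorem isWeaklyRegular_quotient_of_colon {I : Ideal R} {x : R} {rs : List R}
    (hcolon : IsWeaklyRegular (R ⧸ I.colon {x}) rs)
    (hsup : IsWeaklyRegular (R ⧸ I ⊔ Ideal.span {x}) rs) : IsWeaklyRegular (R ⧸ I) rs := by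
  have hcomap : I.colon {x} = Submodule.comap (LinearMap.mulLeft R x) I := by
    ext p
    simp [Submodule.mem_colon_singleton, mul_comm]
  refine isWeaklyRegular_of_exact (f := Submodule.mapQ _ I (LinearMap.mulLeft R x) hcomap.le)
    (g := Submodule.factor le_sup_left) ?_ ?_ (Submodule.factor_surjective _) hcolon hsup
  · rw [← LinearMap.ker_eq_bot, Submodule.mapQ, Submodule.ker_liftQ_eq_bot]
    rw [LinearMap.ker_comp, Submodule.ker_mkQ, hcomap]
  · rw [LinearMap.exact_iff]
    ext z
    obtain ⟨p, rfl⟩ := Submodule.mkQ_surjective _ z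
    constructor
    · intro hp
      obtain ⟨j, hj, y, hy, rfl⟩ := Submodule.mem_sup.mp (Ideal.Quotient.eq_zero_iff_mem.mp hp)
      obtain ⟨q, rfl⟩ := Ideal.mem_span_singleton.mp hy
      exact ⟨Submodule.Quotient.mk q, (Submodule.Quotient.eq _).mpr (by simpa using hj)⟩
    · rintro ⟨q, hq⟩
      obtain ⟨q, rfl⟩ := Submodule.mkQ_surjective _ q
      rw [← hq]
      exact Ideal.Quotient.eq_zero_iff_mem.mpr
        (Ideal.mem_sup_right (Ideal.mul_mem_right _ _ (Ideal.mem_span_singleton_self x)))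

theorem isRegular_quotient_of_le {I 𝔪 : Ideal R} (hI : I ≤ 𝔪)
    (h𝔪 : 𝔪 ≠ ⊤) {rs : List R} (hrs : ∀ r ∈ rs, r ∈ 𝔪) (h : IsWeaklyRegular (R ⧸ I) rs) :
    IsRegular (R ⧸ I) rs := by
  refine ⟨h, fun htop => h𝔪 ?_⟩
  have hle : Ideal.ofList rs • (⊤ : Submodule R (R ⧸ I)) ≤
      LinearMap.ker (Submodule.factor hI) := by
    rw [Submodule.smul_le]
    intro r hr z _
    obtain ⟨z, rfl⟩ := Submodule.mkQ_surjective _ z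
    exact Ideal.Quotient.eq_zero_iff_mem.mpr
      (𝔪.mul_mem_right z ((Ideal.span_le.mpr hrs : Ideal.ofList rs ≤ 𝔪) hr))
  have hone : Submodule.mkQ I 1 ∈ LinearMap.ker (Submodule.factor hI) :=
    hle (htop ▸ Submodule.mem_top)
  exact (Ideal.eq_top_iff_one _).mpr (Ideal.Quotient.eq_zero_iff_mem.mp hone)

theorem isWeaklyRegular_of_eq_add_mul {u v : ℕ → R} {c : R}
    (h : ∀ i, u (i + 1) = v (i + 1) + c * u i) (l : ℕ) :
    ∀ {M : Type*} [AddCommGroup M] [Module R M] (s : ℕ),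
      IsWeaklyRegular M (u s :: (List.range' (s + 1) l).map v) →
      IsWeaklyRegular M ((List.range' s (l + 1)).map u) := by
  induction l with
  | zero => intro M _ _ s hs; simpa using hs
  | succ l ih =>
    intro M _ _ s hs
    rw [List.range'_succ, List.map_cons, isWeaklyRegular_cons_iff] at hs ⊢
    refine ⟨hs.1, ih (s + 1) ?_⟩
    refine (AddEquiv.isWeaklyRegular_congr (e := AddEquiv.refl (QuotSMulTop (u s) M))
      (.cons ?_ (List.forall₂_same.mpr fun _ _ _ => rfl))).mp hs.2
    intro z
    -- Modulo `u s`, the entry `u (s + 1)` may be replaced by `v (s + 1)`.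
    obtain ⟨z, rfl⟩ := Submodule.mkQ_surjective _ z
    rw [AddEquiv.refl_apply, AddEquiv.refl_apply, h, add_smul, left_eq_add, mul_comm, mul_smul,
      ← map_smul, ← map_smul, Submodule.mkQ_apply, Submodule.Quotient.mk_eq_zero]
    exact Submodule.smul_mem_pointwise_smul _ _ _ trivial

theorem isWeaklyRegular_congr_ringEquiv {S : Type*} [CommRing S] (e : R ≃+* S) {rs : List R} :
    IsWeaklyRegular R rs ↔ IsWeaklyRegular S (rs.map e) := by
  refine AddEquiv.isWeaklyRegular_congr (e := e.toAddEquiv) ?_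
  rw [List.forall₂_map_right_iff, List.forall₂_same]
  exact fun r _ x => map_mul e r x

theorem isWeaklyRegular_quotient_iff {S : Type*} [CommRing S] {f : R →+* S} (hf : Surjective f)
    {rs : List R} :
    IsWeaklyRegular (R ⧸ RingHom.ker f) rs ↔ IsWeaklyRegular S (rs.map f) := by
  refine AddEquiv.isWeaklyRegular_congr
    (e := (RingHom.quotientKerEquivOfSurjective hf).toAddEquiv) ?_
  rw [List.forall₂_map_right_iff, List.forall₂_same]
  intro r _ z
  obtain ⟨z, rfl⟩ := Ideal.Quotient.mk_surjective z
  exact map_mul f r z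

open Pointwise in
theorem isWeaklyRegular_cons_C_of_monic {f : Polynomial R} (hf : f.Monic) {rs : List R}
    (hrs : IsWeaklyRegular R rs) :
    IsWeaklyRegular (Polynomial R) (f :: rs.map Polynomial.C) := by
  rw [isWeaklyRegular_cons_iff]
  refine ⟨hf.isRegular.left.isSMulRegular, ?_⟩
  have : Module.Free R (AdjoinRoot f) := hf.free_adjoinRoot
  have hspan : Ideal.span {f} = f • (⊤ : Submodule (Polynomial R) (Polynomial R)) := by
    rw [← Submodule.ideal_span_singleton_smul, smul_eq_mul, Ideal.mul_top]
  let e : AdjoinRoot f ≃+ QuotSMulTop f (Polynomial R) :=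
    (Submodule.quotEquivOfEq (Ideal.span {f}) _ hspan).toAddEquiv
  refine (AddEquiv.isWeaklyRegular_congr (e := e) ?_).mp (hrs.of_flat (S := AdjoinRoot f))
  rw [List.forall₂_map_left_iff, List.forall₂_map_right_iff, List.forall₂_same]
  intro r _ x
  obtain ⟨x, rfl⟩ := AdjoinRoot.mk_surjective x
  rfl

end WeaklyRegular

/-! ### Depth and associated primes -/

section Depth

variable {R M : Type*} [CommRing R] [IsNoetherianRing R] [AddCommGroup M] [Module R M]

/-- The elements killed by `P` form a submodule `U` supported at `𝔪` with `U / xU ⊆ M / xM`, so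
that `Q` can be taken minimal over the annihilator of `U / xU`. -/
theorem exists_isAssociatedPrime_quotSMulTop [Module.Finite R M] {𝔪 P : Ideal R} [h𝔪 : 𝔪.IsPrime]
    (hP : IsAssociatedPrime P M) (hP𝔪 : P ≤ 𝔪) {x : R} (hx : x ∈ 𝔪) (hreg : IsSMulRegular M x) :
    ∃ Q : Ideal R, IsAssociatedPrime Q (QuotSMulTop x M) ∧ P < Q ∧ Q ≤ 𝔪 := by
  obtain ⟨-, n, hn⟩ := isAssociatedPrime_iff.mp hP
  have mem_P (r : R) : r ∈ P ↔ r • n = 0 := by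
    rw [hn, Submodule.mem_colon_singleton, Submodule.mem_bot]
  let U : Submodule R M := Submodule.torsionBySet R M P
  have hnU : n ∈ U := (Submodule.mem_torsionBySet_iff _ _).mpr fun p => (mem_P _).mp p.2
  have h𝔪U : ⟨𝔪, h𝔪⟩ ∈ Module.support R (QuotSMulTop x U) := by
    rw [Module.support_quotSMulTop]
    refine ⟨Module.mem_support_iff_exists_annihilator.mpr ⟨⟨n, hnU⟩, fun r hr => hP𝔪 ?_⟩, ?_⟩
    · rw [Submodule.mem_annihilator_span_singleton] at hr
      exact (mem_P r).mpr (congrArg Subtype.val hr)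
    · simpa using hx
  obtain ⟨Q, hQ, hQ𝔪⟩ := Ideal.exists_minimalPrimes_le (Module.mem_support_iff_of_finite.mp h𝔪U)
  have hinj : Injective (QuotSMulTop.map x U.subtype) := by
    refine quotSMulTop_map_injective U.injective_subtype (LinearMap.exact_subtype_mkQ U) <|
      (isSMulRegular_quotient_iff_mem_of_smul_mem U x).mpr fun y hy => ?_
    rw [Submodule.mem_torsionBySet_iff] at hy ⊢
    exact fun p => hreg.right_eq_zero_of_smul (by rw [smul_comm]; exact hy p)
  have hQass : IsAssociatedPrime Q (QuotSMulTop x U) :=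
    Module.associatedPrimes.minimalPrimes_annihilator_subset_associatedPrimes R _ hQ
  have hann : P ≤ Module.annihilator R (QuotSMulTop x U) := fun p hp => by
    refine Module.mem_annihilator.mpr fun z => ?_
    obtain ⟨u, rfl⟩ := Submodule.mkQ_surjective _ z
    have hpu : p • u = 0 := @Submodule.torsionBySet_isTorsionBySet R M _ _ _ P u ⟨p, hp⟩
    rw [← map_smul, hpu, map_zero]
  have hxQ : x ∈ Q := hQ.1.2 (QuotSMulTop.mem_annihilator U x)
  have hxP : x ∉ P := fun h => by
    have h0 : n = 0 := hreg.right_eq_zero_of_smul ((mem_P x).mp h)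
    exact hP.1.ne_top ((Ideal.eq_top_iff_one _).mpr ((mem_P 1).mpr (by simp [h0])))
  exact ⟨Q, hQass.map_of_injective _ hinj,
    lt_of_le_of_ne (hann.trans hQ.1.2) fun h => hxP (h ▸ hxQ), hQ𝔪⟩

theorem length_le_coheight_of_isWeaklyRegular {𝔪 : Ideal R} [𝔪.IsPrime] {rs : List R}
    (hrs : ∀ r ∈ rs, r ∈ 𝔪) [Module.Finite R M] (hreg : IsWeaklyRegular M rs)
    (P : PrimeSpectrum R) (hP : IsAssociatedPrime P.asIdeal M) (hP𝔪 : P.asIdeal ≤ 𝔪) :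
    (rs.length : ℕ∞) ≤ Order.coheight P := by
  induction rs generalizing M P with
  | nil => simp
  | cons x rs ih =>
    rw [isWeaklyRegular_cons_iff] at hreg
    obtain ⟨Q, hQ, hPQ, hQ𝔪⟩ :=
      exists_isAssociatedPrime_quotSMulTop hP hP𝔪 (hrs x (by simp)) hreg.1
    let Q' : PrimeSpectrum R := ⟨Q, hQ.isPrime⟩
    calc ((x :: rs).length : ℕ∞) = rs.length + 1 := by simp
      _ ≤ Order.coheight Q' + 1 := by
        gcongr
        exact ih (fun r hr => hrs r (List.mem_cons_of_mem x hr)) hreg.2 Q' hQ hQ𝔪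
      _ ≤ Order.coheight P := Order.coheight_add_one_le (show P < Q' from hPQ)

theorem length_le_ringKrullDim_quotient_of_isWeaklyRegular {𝔪 P : Ideal R} [𝔪.IsPrime]
    {rs : List R} (hrs : ∀ r ∈ rs, r ∈ 𝔪) [Module.Finite R M] (hreg : IsWeaklyRegular M rs)
    (hP : IsAssociatedPrime P M) (hP𝔪 : P ≤ 𝔪) :
    (rs.length : WithBot ℕ∞) ≤ ringKrullDim (R ⧸ P) := by
  let P' : PrimeSpectrum R := ⟨P, hP.isPrime⟩
  have hdim : ringKrullDim (R ⧸ P) = Order.coheight P' := by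
    rw [Order.coheight_eq_krullDim_Ici, ringKrullDim_quotient]
    rfl
  rw [hdim]
  exact_mod_cast length_le_coheight_of_isWeaklyRegular hrs hreg P' hP hP𝔪

end Depth

/-! ### Complete homogeneous symmetric polynomials -/

section Hsymm

variable {R : Type*} [CommRing R] {σ τ : Type*}

theorem optionEquivLeft_rename_some (p : MvPolynomial σ R) :
    optionEquivLeft R σ (rename some p) = Polynomial.C p := by
  rw [← AlgEquiv.eq_symm_apply, optionEquivLeft_symm_apply, Polynomial.aevalTower_C]

theorem killCompl_X_of_notMem {f : τ → σ} (hf : Injective f) {i : σ} (hi : i ∉ Set.range f) :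
    killCompl hf (X i : MvPolynomial σ R) = 0 := by
  rw [killCompl, aeval_X, dif_neg hi]

theorem killCompl_X_apply {f : τ → σ} (hf : Injective f) (j : τ) :
    killCompl hf (X (f j) : MvPolynomial σ R) = X j := by
  rw [← rename_X, killCompl_rename_app]

variable [Fintype σ] [DecidableEq σ] [Fintype τ] [DecidableEq τ]

theorem hsymm_option_succ (n : ℕ) :
    hsymm (Option σ) R (n + 1) =
      rename some (hsymm σ R (n + 1)) + X none * hsymm (Option σ) R n := by
  have hcons (s : Sym (Option σ) n) : ((none ::ₛ s : Sym _ _).1.map (X (R := R))).prod =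
      X none * (s.1.map X).prod := by
    simp [Sym.cons]
  rw [hsymm, ← (symOptionSuccEquiv (α := σ)).symm.sum_comp, Fintype.sum_sum_type, add_comm]
  simp only [symOptionSuccEquiv, Equiv.coe_fn_symm_mk, SymOptionSuccEquiv.decode, hcons, hsymm,
    Finset.mul_sum, map_sum]
  simp [← Multiset.prod_hom']

theorem optionEquivLeft_hsymm_succ (n : ℕ) :
    optionEquivLeft R σ (hsymm (Option σ) R (n + 1)) =
      Polynomial.C (hsymm σ R (n + 1)) +
        Polynomial.X * optionEquivLeft R σ (hsymm (Option σ) R n) := by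
  rw [hsymm_option_succ, map_add, map_mul, optionEquivLeft_rename_some, optionEquivLeft_X_none]

theorem monic_optionEquivLeft_hsymm [Nontrivial R] (n : ℕ) :
    (optionEquivLeft R σ (hsymm (Option σ) R n)).Monic := by
  induction n with
  | zero => simp
  | succ n ih =>
    rw [optionEquivLeft_hsymm_succ]
    have hmonic := Polynomial.monic_X.mul ih
    refine hmonic.add_of_right (Polynomial.degree_C_le.trans_lt ?_)
    rw [Polynomial.degree_eq_natDegree hmonic.ne_zero, Polynomial.monic_X.natDegree_mul ih,
      Polynomial.natDegree_X]
    exact_mod_cast (by omega : 0 < 1 + _)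

/-- The recursion for `hsymm` lets all polynomials but the first be replaced by their
counterparts in the variables `some i`, and the first one is monic in `X none`. -/
theorem isWeaklyRegular_hsymm_option [Nontrivial R] {s l : ℕ}
    (h : IsWeaklyRegular (MvPolynomial σ R) ((List.range' (s + 1) l).map (hsymm σ R))) :
    IsWeaklyRegular (MvPolynomial (Option σ) R)
      ((List.range' s (l + 1)).map (hsymm (Option σ) R)) := by
  rw [isWeaklyRegular_congr_ringEquiv (optionEquivLeft R σ).toRingEquiv, List.map_map]
  refine isWeaklyRegular_of_eq_add_mul (u := fun n => optionEquivLeft R σ (hsymm (Option σ) R n))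
    (v := fun n => Polynomial.C (hsymm σ R n)) (c := Polynomial.X) optionEquivLeft_hsymm_succ l s ?_
  simpa using! isWeaklyRegular_cons_C_of_monic (monic_optionEquivLeft_hsymm s) h

theorem isWeaklyRegular_hsymm_congr (e : σ ≃ τ) (l : List ℕ) :
    IsWeaklyRegular (MvPolynomial σ R) (l.map (hsymm σ R)) ↔
      IsWeaklyRegular (MvPolynomial τ R) (l.map (hsymm τ R)) := by
  rw [isWeaklyRegular_congr_ringEquiv (renameEquiv R e).toRingEquiv, List.map_map]
  refine iff_of_eq (congrArg _ (List.map_congr_left fun n _ => ?_))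
  exact rename_hsymm σ R n e

theorem isWeaklyRegular_hsymm [Nontrivial R] (s : ℕ) {l : ℕ} (hl : l ≤ Fintype.card σ) :
    IsWeaklyRegular (MvPolynomial σ R) ((List.range' s l).map (hsymm σ R)) := by
  suffices h : ∀ r s l, l ≤ r →
      IsWeaklyRegular (MvPolynomial (Fin r) R) ((List.range' s l).map (hsymm (Fin r) R)) from
    (isWeaklyRegular_hsymm_congr (Fintype.equivFin σ) _).mpr (h _ s l hl)
  intro r
  induction r with
  | zero => intro s l hl; simp [Nat.le_zero.mp hl]
  | succ r ih =>
    rintro s (_ | l) hl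
    · simp
    · rw [isWeaklyRegular_hsymm_congr (finSuccEquiv r)]
      exact isWeaklyRegular_hsymm_option (ih (s + 1) l (Nat.le_of_succ_le_succ hl))

theorem killCompl_hsymm {f : τ → σ} (hf : Injective f) (n : ℕ) :
    killCompl hf (hsymm σ R n) = hsymm τ R n := by
  rw [hsymm, hsymm, map_sum]
  refine (Fintype.sum_of_injective (Sym.map f) (Sym.map_injective hf n) _ _ (fun s hs => ?_)
    fun s => ?_).symm
  · obtain ⟨i, hi, hif⟩ : ∃ i ∈ s, i ∉ Set.range f := by
      by_contra! h
      choose g hg using h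
      refine hs ⟨s.attach.map fun i : {i // i ∈ s} => g i i.2, ?_⟩
      rw [Sym.map_map]
      simpa [Function.comp_def, hg] using s.attach_map_coe
    rw [← Multiset.prod_hom', Multiset.prod_eq_zero]
    exact Multiset.mem_map.mpr ⟨i, hi, killCompl_X_of_notMem hf hif⟩
  · simp [← Multiset.prod_hom', killCompl_X_apply]

theorem hsymm_mem_span_range_X {n : ℕ} (hn : n ≠ 0) :
    hsymm σ R n ∈ Ideal.span (Set.range (X : σ → MvPolynomial σ R)) := by
  refine Ideal.sum_mem _ fun s _ => ?_
  obtain ⟨i, hi⟩ := Multiset.card_pos_iff_exists_mem.mp (s.2.symm ▸ Nat.pos_of_ne_zero hn)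
  exact Ideal.mem_of_dvd _ (Multiset.dvd_prod (Multiset.mem_map_of_mem X hi))
    (Ideal.subset_span ⟨i, rfl⟩)

end Hsymm

/-! ### Coordinate subspaces -/

section CoordinateSubspace

variable {R : Type*} [CommRing R] {σ τ : Type*}

theorem killCompl_surjective {f : τ → σ} (hf : Injective f) :
    Surjective (killCompl (R := R) hf) :=
  fun p => ⟨rename f p, killCompl_rename_app hf p⟩

theorem ker_killCompl {f : τ → σ} (hf : Injective f) :
    RingHom.ker (killCompl (R := R) hf) = Ideal.span (X '' (Set.range f)ᶜ) := by
  refine le_antisymm (fun p hp => ?_) (Ideal.span_le.mpr ?_)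
  · set I : Ideal (MvPolynomial σ R) := Ideal.span (X '' (Set.range f)ᶜ)
    have hfactor : ((Ideal.Quotient.mkₐ R I).comp (rename f)).comp (killCompl hf) =
        Ideal.Quotient.mkₐ R I := by
      ext i
      by_cases hi : i ∈ Set.range f
      · obtain ⟨j, rfl⟩ := hi
        simp [killCompl_X_apply]
      · rw [AlgHom.comp_apply, killCompl_X_of_notMem hf hi, map_zero]
        exact (Ideal.Quotient.eq_zero_iff_mem.mpr
          (Ideal.subset_span (Set.mem_image_of_mem X hi))).symm
    have hp' := DFunLike.congr_fun hfactor p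
    rw [AlgHom.comp_apply, RingHom.mem_ker.mp hp, map_zero] at hp'
    exact Ideal.Quotient.eq_zero_iff_mem.mp hp'.symm
  · rintro _ ⟨i, hi, rfl⟩
    exact killCompl_X_of_notMem hf hi

theorem span_X_image_eq_ker (C : Set σ) :
    Ideal.span (X '' C) =
      RingHom.ker (killCompl (R := R) (Subtype.val_injective (p := (· ∉ C)))) := by
  rw [ker_killCompl, Subtype.range_val_subtype]
  simp [Set.compl_def]

theorem isPrime_span_X_image [IsDomain R] (C : Set σ) :
    (Ideal.span (X '' C : Set (MvPolynomial σ R))).IsPrime := by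
  rw [span_X_image_eq_ker]
  exact RingHom.ker_isPrime _

theorem isPrime_span_range_X [IsDomain R] :
    (Ideal.span (Set.range (X : σ → MvPolynomial σ R))).IsPrime :=
  Set.image_univ (f := (X : σ → MvPolynomial σ R)) ▸ isPrime_span_X_image Set.univ

variable [Fintype σ] [DecidableEq σ]

theorem ringKrullDim_quotient_span_X_image {K : Type*} [Field K] (C : Finset σ) :
    ringKrullDim (MvPolynomial σ K ⧸ Ideal.span (X '' (C : Set σ) : Set (MvPolynomial σ K))) =
      Cᶜ.card := by
  rw [span_X_image_eq_ker, ringKrullDim_eq_of_ringEquiv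
    (Ideal.quotientKerAlgEquivOfSurjective (killCompl_surjective _)).toRingEquiv,
    MvPolynomial.ringKrullDim_of_isNoetherianRing]
  simp [Finset.card_compl, Fintype.card_subtype_compl]

theorem isWeaklyRegular_hsymm_quotient_span_X_image [Nontrivial R] (C : Finset σ) (s : ℕ) {l : ℕ}
    (hl : l ≤ Cᶜ.card) :
    IsWeaklyRegular (MvPolynomial σ R ⧸ Ideal.span (X '' (C : Set σ) : Set (MvPolynomial σ R)))
      ((List.range' s l).map (hsymm σ R)) := by
  rw [span_X_image_eq_ker]
  refine (isWeaklyRegular_quotient_iff (killCompl_surjective _)).mpr ?_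
  rw [List.map_map]
  have hcongr : (List.range' s l).map (killCompl Subtype.val_injective ∘ hsymm σ R) =
      (List.range' s l).map (hsymm {i // i ∉ C} R) :=
    List.map_congr_left fun n _ => killCompl_hsymm _ n
  refine hcongr ▸ isWeaklyRegular_hsymm s ?_
  simpa [Finset.card_compl, Fintype.card_subtype_compl] using hl

end CoordinateSubspace

/-! ### Squarefree monomial ideals -/

/-- The squarefree monomial ideal generated by the `sqMon K F` with `F ∈ 𝒩`. It is studied mostly
for upper sets `𝒩`, which then record all squarefree monomials of the ideal. -/
noncomputable def sqIdeal (K : Type) [Field K] {σ : Type} (𝒩 : Set (Finset σ)) :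
    Ideal (MvPolynomial σ K) :=
  Ideal.span (sqMon K '' 𝒩)

section SqIdeal

variable {K : Type} [Field K] {σ : Type} {𝒩 : Set (Finset σ)}

theorem sqMon_eq_monomial (F : Finset σ) :
    sqMon K F = monomial (∑ i ∈ F, Finsupp.single i 1) 1 :=
  (monomial_sum_one F fun i => Finsupp.single i 1).symm

theorem sqMon_insert [DecidableEq σ] {v : σ} {F : Finset σ} (hv : v ∉ F) :
    sqMon K (insert v F) = X v * sqMon K F :=
  Finset.prod_insert hv

theorem X_dvd_sqMon {v : σ} {F : Finset σ} (hv : v ∈ F) : (X v : MvPolynomial σ K) ∣ sqMon K F :=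
  Finset.dvd_prod_of_mem _ hv

theorem sqMon_dvd_sqMon {F G : Finset σ} (h : F ⊆ G) : sqMon K F ∣ sqMon K G :=
  Finset.prod_dvd_prod_of_subset _ _ _ h

theorem sum_single_one_apply [DecidableEq σ] (F : Finset σ) (i : σ) :
    (∑ j ∈ F, Finsupp.single j 1 : σ →₀ ℕ) i = if i ∈ F then 1 else 0 := by
  simp [Finsupp.finsetSum_apply, Finsupp.single_apply]

theorem support_sum_single_one (F : Finset σ) :
    (∑ j ∈ F, Finsupp.single j 1 : σ →₀ ℕ).support = F := by
  classical
  ext i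
  simp [sum_single_one_apply]

theorem sum_single_one_le_iff (F : Finset σ) (e : σ →₀ ℕ) :
    ∑ j ∈ F, Finsupp.single j 1 ≤ e ↔ F ⊆ e.support := by
  classical
  refine ⟨fun h => support_sum_single_one F ▸ Finsupp.support_mono h, fun h i => ?_⟩
  rw [sum_single_one_apply]
  split_ifs with hi
  · exact Nat.one_le_iff_ne_zero.mpr (Finsupp.mem_support_iff.mp (h hi))
  · exact Nat.zero_le _

theorem mem_sqIdeal_iff (h𝒩 : IsUpperSet 𝒩) (p : MvPolynomial σ K) :
    p ∈ sqIdeal K 𝒩 ↔ ∀ e ∈ p.support, e.support ∈ 𝒩 := by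
  have himage : sqMon K '' 𝒩 =
      (fun e => monomial e 1) '' ((fun F => ∑ i ∈ F, Finsupp.single i 1) '' 𝒩) := by
    simp_rw [Set.image_image, ← sqMon_eq_monomial]
  rw [sqIdeal, himage, mem_ideal_span_monomial_image]
  refine forall₂_congr fun e _ =>
    ⟨?_, fun h => ⟨_, ⟨_, h, rfl⟩, (sum_single_one_le_iff _ _).mpr le_rfl⟩⟩
  rintro ⟨_, ⟨F, hF, rfl⟩, hle⟩
  exact h𝒩 ((sum_single_one_le_iff _ _).mp hle) hF

theorem sqMon_mem_sqIdeal {F : Finset σ} (hF : F ∈ 𝒩) : sqMon K F ∈ sqIdeal K 𝒩 :=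
  Ideal.subset_span ⟨F, hF, rfl⟩

theorem sqMon_mem_sqIdeal_iff (h𝒩 : IsUpperSet 𝒩) (F : Finset σ) :
    sqMon K F ∈ sqIdeal K 𝒩 ↔ F ∈ 𝒩 := by
  classical
  rw [mem_sqIdeal_iff h𝒩, sqMon_eq_monomial, support_monomial, if_neg one_ne_zero]
  simp [support_sum_single_one]

theorem sqIdeal_eq_top (h : ∅ ∈ 𝒩) : sqIdeal K 𝒩 = ⊤ :=
  (Ideal.eq_top_iff_one _).mpr (by simpa [sqMon] using sqMon_mem_sqIdeal (K := K) h)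

theorem sqIdeal_ne_bot (h : 𝒩.Nonempty) : sqIdeal K 𝒩 ≠ ⊥ := by
  obtain ⟨F, hF⟩ := h
  refine Submodule.ne_bot_iff _ |>.mpr ⟨_, sqMon_mem_sqIdeal hF, ?_⟩
  exact Finset.prod_ne_zero_iff.mpr fun i _ => X_ne_zero i

theorem sqIdeal_disjoint_eq_span_X_image (C : Finset σ) :
    sqIdeal K {F | ¬Disjoint F C} = Ideal.span (X '' (C : Set σ)) := by
  refine le_antisymm (Ideal.span_le.mpr ?_) (Ideal.span_le.mpr ?_)
  · rintro _ ⟨F, hF, rfl⟩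
    obtain ⟨c, hcF, hcC⟩ := Finset.not_disjoint_iff.mp hF
    exact Ideal.mem_of_dvd _ (X_dvd_sqMon hcF) (Ideal.subset_span ⟨c, hcC, rfl⟩)
  · rintro _ ⟨c, hc, rfl⟩
    have hmem : sqMon K {c} ∈ sqIdeal K {F | ¬Disjoint F C} :=
      sqMon_mem_sqIdeal (by simpa using hc)
    simpa [sqMon] using hmem

theorem sqIdeal_le_span_range_X (h : ∅ ∉ 𝒩) :
    sqIdeal K 𝒩 ≤ Ideal.span (Set.range (X : σ → MvPolynomial σ K)) := by
  refine Ideal.span_le.mpr ?_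
  rintro _ ⟨F, hF, rfl⟩
  obtain ⟨c, hc⟩ := Finset.nonempty_iff_ne_empty.mpr fun h0 => h (h0 ▸ hF)
  exact Ideal.mem_of_dvd _ (X_dvd_sqMon hc) (Ideal.subset_span ⟨c, rfl⟩)

theorem sqIdeal_sup_span_X (v : σ) :
    sqIdeal K 𝒩 ⊔ Ideal.span {X v} = sqIdeal K {F | F ∈ 𝒩 ∨ v ∈ F} := by
  have hunion : {F | F ∈ 𝒩 ∨ v ∈ F} = 𝒩 ∪ {F | ¬Disjoint F {v}} := by ext F; simp
  rw [hunion, sqIdeal, sqIdeal, Set.image_union, Ideal.span_union]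
  congr 1
  simpa [sqIdeal] using (sqIdeal_disjoint_eq_span_X_image (K := K) {v}).symm

variable [DecidableEq σ]

theorem isUpperSet_setOf_insert_mem (h𝒩 : IsUpperSet 𝒩) (v : σ) :
    IsUpperSet {F | insert v F ∈ 𝒩} :=
  h𝒩.preimage fun _ _ => Finset.insert_subset_insert v

theorem X_mul_mem_sqIdeal_iff (h𝒩 : IsUpperSet 𝒩) (v : σ) (p : MvPolynomial σ K) :
    X v * p ∈ sqIdeal K 𝒩 ↔ p ∈ sqIdeal K {F | insert v F ∈ 𝒩} := by
  have hsupport (e : σ →₀ ℕ) : (Finsupp.single v 1 + e).support = insert v e.support := by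
    ext i
    by_cases h : i = v <;> simp [h, eq_comm]
  rw [mem_sqIdeal_iff h𝒩, mem_sqIdeal_iff (isUpperSet_setOf_insert_mem h𝒩 v), support_X_mul]
  simp [hsupport]

theorem sqMon_mul_mem_sqIdeal_iff (h𝒩 : IsUpperSet 𝒩) (F : Finset σ) (p : MvPolynomial σ K) :
    sqMon K F * p ∈ sqIdeal K 𝒩 ↔ p ∈ sqIdeal K {G | G ∪ F ∈ 𝒩} := by
  induction F using Finset.induction_on generalizing 𝒩 with
  | empty => simp [sqMon]
  | insert v F hv ih =>
    rw [sqMon_insert hv, mul_assoc, X_mul_mem_sqIdeal_iff h𝒩,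
      ih (isUpperSet_setOf_insert_mem h𝒩 v)]
    simp only [Set.mem_ofPred_eq, Finset.union_insert]

theorem sqIdeal_colon_X (h𝒩 : IsUpperSet 𝒩) (v : σ) :
    (sqIdeal K 𝒩).colon {X v} = sqIdeal K {F | insert v F ∈ 𝒩} := by
  ext p
  rw [Submodule.mem_colon_singleton, smul_eq_mul, mul_comm, X_mul_mem_sqIdeal_iff h𝒩]

theorem isWeaklyRegular_quotient_sqIdeal_of_split (h𝒩 : IsUpperSet 𝒩) (v : σ)
    {rs : List (MvPolynomial σ K)}
    (hinsert : IsWeaklyRegular (MvPolynomial σ K ⧸ sqIdeal K {F | insert v F ∈ 𝒩}) rs)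
    (hkill : IsWeaklyRegular (MvPolynomial σ K ⧸ sqIdeal K {F | F ∈ 𝒩 ∨ v ∈ F}) rs) :
    IsWeaklyRegular (MvPolynomial σ K ⧸ sqIdeal K 𝒩) rs := by
  rw [← sqIdeal_colon_X h𝒩] at hinsert
  rw [← sqIdeal_sup_span_X] at hkill
  exact isWeaklyRegular_quotient_of_colon hinsert hkill

end SqIdeal

/-! ### A lower bound for the depth -/

/-- The ideal obtained from `sqIdeal K 𝒩` by inverting the variables in `A`, that is by setting them
equal to `1`, and adjoining the variables in `C`. -/
noncomputable def branchIdeal (K : Type) [Field K] {σ : Type} [DecidableEq σ]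
    (𝒩 : Set (Finset σ)) (A C : Finset σ) : Ideal (MvPolynomial σ K) :=
  sqIdeal K {F | F ∪ A ∈ 𝒩 ∨ ¬Disjoint F C}

section BranchIdeal

variable {K : Type} [Field K] {σ : Type} [DecidableEq σ] {𝒩 : Set (Finset σ)}

theorem branchIdeal_empty_empty : branchIdeal K 𝒩 ∅ ∅ = sqIdeal K 𝒩 := by
  simp [branchIdeal]

theorem branchIdeal_eq_top {A : Finset σ} (hA : A ∈ 𝒩) (C : Finset σ) :
    branchIdeal K 𝒩 A C = ⊤ :=
  sqIdeal_eq_top (Or.inl (by simpa using hA))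

theorem branchIdeal_eq_span_X_image {A C : Finset σ} (hAC : Disjoint A C)
    (h : ∀ F ∈ 𝒩, A ⊆ F → ¬Disjoint F C) :
    branchIdeal K 𝒩 A C = Ideal.span (X '' (C : Set σ)) := by
  rw [← sqIdeal_disjoint_eq_span_X_image, branchIdeal]
  congr! 3 with F
  exact or_iff_right_of_imp fun hF hFC =>
    h _ hF Finset.subset_union_right (Finset.disjoint_union_left.mpr ⟨hFC, hAC⟩)

theorem isWeaklyRegular_branchIdeal_of_insert (h𝒩 : IsUpperSet 𝒩) {A C : Finset σ} {v : σ}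
    (hv : v ∉ C) {rs : List (MvPolynomial σ K)}
    (hinvert : IsWeaklyRegular (MvPolynomial σ K ⧸ branchIdeal K 𝒩 (insert v A) C) rs)
    (hkill : IsWeaklyRegular (MvPolynomial σ K ⧸ branchIdeal K 𝒩 A (insert v C)) rs) :
    IsWeaklyRegular (MvPolynomial σ K ⧸ branchIdeal K 𝒩 A C) rs := by
  have hleft : {F | F ∪ insert v A ∈ 𝒩 ∨ ¬Disjoint F C} =
      {F | insert v F ∈ {F | F ∪ A ∈ 𝒩 ∨ ¬Disjoint F C}} := by
    ext F
    simp [hv]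
  have hright : {F | F ∪ A ∈ 𝒩 ∨ ¬Disjoint F (insert v C)} =
      {F | F ∈ {F | F ∪ A ∈ 𝒩 ∨ ¬Disjoint F C} ∨ v ∈ F} := by
    ext F
    simp only [Set.mem_ofPred_eq, Finset.disjoint_insert_right, not_and_or, not_not]
    tauto
  rw [branchIdeal, hleft] at hinvert
  rw [branchIdeal, hright] at hkill
  exact isWeaklyRegular_quotient_sqIdeal_of_split
    (fun F G h => Or.imp (h𝒩 (Finset.union_subset_union_left h)) (mt (Disjoint.mono_left h)))
    v hinvert hkill

theorem isWeaklyRegular_sqIdeal_of_forall_branchIdeal (h𝒩 : IsUpperSet 𝒩)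
    {rs : List (MvPolynomial σ K)} (Y : Finset σ)
    (h : ∀ C ⊆ Y, IsWeaklyRegular (MvPolynomial σ K ⧸ branchIdeal K 𝒩 (Y \ C) C) rs) :
    IsWeaklyRegular (MvPolynomial σ K ⧸ sqIdeal K 𝒩) rs := by
  induction Y using Finset.induction_on with
  | empty =>
    rw [← branchIdeal_empty_empty]
    exact h ∅ subset_rfl
  | insert v Y hv ih =>
    refine ih fun C hC => ?_
    have hvC : v ∉ C := fun hvC => hv (hC hvC)
    refine isWeaklyRegular_branchIdeal_of_insert h𝒩 hvC ?_ ?_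
    · rw [← Finset.insert_sdiff_of_notMem _ hvC]
      exact h C (hC.trans (Finset.subset_insert _ _))
    · have hsdiff : insert v Y \ insert v C = Y \ C := by
        rw [Finset.insert_sdiff_insert, Finset.sdiff_insert_of_notMem hv]
      rw [← hsdiff]
      exact h _ (Finset.insert_subset_insert v hC)

variable [Fintype σ]

theorem isWeaklyRegular_hsymm_branchIdeal (h𝒩 : IsUpperSet 𝒩) {t : ℕ} (s : ℕ)
    {A C : Finset σ} (hAC : Disjoint A C) (ht : t ≤ Cᶜ.card)
    (h : ∀ F ∈ 𝒩, A ⊆ F → Disjoint F C → t < F.card) :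
    IsWeaklyRegular (MvPolynomial σ K ⧸ branchIdeal K 𝒩 A C)
      ((List.range' s t).map (hsymm σ K)) := by
  induction hd : (A ∪ C)ᶜ.card using Nat.strong_induction_on generalizing A C with
  | _ d ih
  by_cases hA : A ∈ 𝒩
  · rw [branchIdeal_eq_top hA]
    exact isWeaklyRegular_of_subsingleton _ _
  by_cases hF : ∀ F ∈ 𝒩, A ⊆ F → ¬Disjoint F C
  · rw [branchIdeal_eq_span_X_image hAC hF]
    exact isWeaklyRegular_hsymm_quotient_span_X_image C s ht
  push Not at hF
  obtain ⟨F, hF𝒩, hAF, hFC⟩ := hF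
  obtain ⟨v, hvF, hvA⟩ := Finset.not_subset.mp fun hFA => hA (h𝒩 hFA hF𝒩)
  have hvC : v ∉ C := Finset.disjoint_left.mp hFC hvF
  have hlt : (insert v (A ∪ C))ᶜ.card < d :=
    hd ▸ Finset.card_lt_card (Finset.compl_ssubset_compl.mpr
      (Finset.ssubset_insert (by simp [hvA, hvC])))
  refine isWeaklyRegular_branchIdeal_of_insert h𝒩 hvC ?_ ?_
  · refine ih _ hlt (by simp [hAC, hvC]) ht (fun G hG hAG => h G hG ?_) ?_
    · exact (Finset.subset_insert _ _).trans hAG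
    · rw [Finset.insert_union]
  · refine ih _ hlt (by simp [hAC, hvA]) ?_ (fun G hG hAG hGC => h G hG hAG ?_) ?_
    · have htF : t < F.card := h F hF𝒩 hAF hFC
      have hFle : F.card ≤ Cᶜ.card := Finset.card_le_card (le_compl_iff_disjoint_right.mpr hFC)
      rw [Finset.compl_insert, Finset.card_erase_of_mem (Finset.mem_compl.mpr hvC)]
      omega
    · exact hGC.mono_right (Finset.subset_insert _ _)
    · rw [Finset.union_insert]

theorem isWeaklyRegular_hsymm_quotient_sqIdeal (h𝒩 : IsUpperSet 𝒩) {t : ℕ} (s : ℕ)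
    {Y W : Finset σ} (ht : t + Y.card ≤ Fintype.card σ)
    (hY : ∀ F ∈ 𝒩, ¬Y ⊆ F → t < F.card)
    (hW : ∀ F, Y ⊆ F → F ∪ W ∈ 𝒩 → F ∈ 𝒩)
    (hYW : ∀ F ∈ 𝒩, Y ∪ W ⊆ F → t < F.card) :
    IsWeaklyRegular (MvPolynomial σ K ⧸ sqIdeal K 𝒩) ((List.range' s t).map (hsymm σ K)) := by
  refine isWeaklyRegular_sqIdeal_of_forall_branchIdeal h𝒩 Y fun C hC => ?_
  have htC : t ≤ Cᶜ.card := by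
    have hCY := Finset.card_le_card hC
    rw [Finset.card_compl]
    omega
  obtain rfl | ⟨c, hc⟩ := C.eq_empty_or_nonempty
  · have hbranch : branchIdeal K 𝒩 (Y \ ∅) ∅ = branchIdeal K 𝒩 (Y ∪ W) ∅ := by
      rw [Finset.sdiff_empty, branchIdeal, branchIdeal]
      congr! 4 with F
      rw [← Finset.union_assoc]
      exact ⟨h𝒩 Finset.subset_union_left, hW _ Finset.subset_union_right⟩
    rw [hbranch]
    exact isWeaklyRegular_hsymm_branchIdeal h𝒩 s (Finset.disjoint_empty_right _) htC
      fun F hF hYF _ => hYW F hF hYF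
  · exact isWeaklyRegular_hsymm_branchIdeal h𝒩 s Finset.sdiff_disjoint htC
      fun F hF _ hFC => hY F hF fun hYF => Finset.disjoint_left.mp hFC (hYF (hC hc)) hc

end BranchIdeal

section PolyDepth

variable {K : Type} [Field K] {σ : Type} {𝒩 : Set (Finset σ)}

theorem setOf_union_mem_eq_of_maximal [Fintype σ] [DecidableEq σ] {F : Finset σ}
    (hF : Maximal (· ∉ 𝒩) F) : {G | G ∪ F ∈ 𝒩} = {G | ¬Disjoint G Fᶜ} := by
  ext G
  rw [Set.mem_ofPred_eq, Set.mem_ofPred_eq, disjoint_compl_right_iff, ← not_iff_not,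
    not_not]
  refine ⟨fun h => ?_, fun h => ?_⟩
  · exact Finset.subset_union_left.trans (hF.le_of_ge h Finset.subset_union_right)
  · rw [Finset.union_eq_right.mpr h]
    exact hF.prop

theorem isAssociatedPrime_quotient_sqIdeal [Fintype σ] [DecidableEq σ] (h𝒩 : IsUpperSet 𝒩)
    {F : Finset σ} (hF : Maximal (· ∉ 𝒩) F) :
    IsAssociatedPrime (Ideal.span (X '' ((Fᶜ : Finset σ) : Set σ)) : Ideal (MvPolynomial σ K))
      (MvPolynomial σ K ⧸ sqIdeal K 𝒩) := by
  refine isAssociatedPrime_iff.mpr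
    ⟨isPrime_span_X_image _, Ideal.Quotient.mk _ (sqMon K F), ?_⟩
  ext p
  rw [← sqIdeal_disjoint_eq_span_X_image, ← setOf_union_mem_eq_of_maximal hF,
    ← sqMon_mul_mem_sqIdeal_iff h𝒩, mul_comm, Submodule.mem_colon_singleton, Submodule.mem_bot,
    ← Ideal.Quotient.eq_zero_iff_mem, map_mul]
  rfl

theorem length_le_card_of_isWeaklyRegular_quotient_sqIdeal [Finite σ] (h𝒩 : IsUpperSet 𝒩)
    {F : Finset σ} (hF : Maximal (· ∉ 𝒩) F) {rs : List (MvPolynomial σ K)}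
    (hrs : ∀ r ∈ rs, r ∈ Ideal.span (Set.range (X : σ → MvPolynomial σ K)))
    (h : IsWeaklyRegular (MvPolynomial σ K ⧸ sqIdeal K 𝒩) rs) : rs.length ≤ F.card := by
  classical
  cases nonempty_fintype σ
  have := isPrime_span_range_X (R := K) (σ := σ)
  have hdim := length_le_ringKrullDim_quotient_of_isWeaklyRegular hrs h
    (isAssociatedPrime_quotient_sqIdeal h𝒩 hF) (Ideal.span_mono (Set.image_subset_range _ _))
  rw [ringKrullDim_quotient_span_X_image, compl_compl] at hdim
  exact_mod_cast hdim

theorem polyDepth_sqIdeal [Fintype σ] [DecidableEq σ] (h𝒩 : IsUpperSet 𝒩) {F Y W : Finset σ}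
    (hF : Maximal (· ∉ 𝒩) F) (hcard : F.card + Y.card ≤ Fintype.card σ)
    (hY : ∀ G ∈ 𝒩, ¬Y ⊆ G → F.card < G.card)
    (hW : ∀ G, Y ⊆ G → G ∪ W ∈ 𝒩 → G ∈ 𝒩)
    (hYW : ∀ G ∈ 𝒩, Y ∪ W ⊆ G → F.card < G.card) :
    polyDepth K (sqIdeal K 𝒩) = F.card := by
  have hmem : ∀ r ∈ (List.range' 1 F.card).map (hsymm σ K),
      r ∈ Ideal.span (Set.range (X : σ → MvPolynomial σ K)) := by
    simp only [List.mem_map, List.mem_range'_1]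
    rintro _ ⟨n, hn, rfl⟩
    exact hsymm_mem_span_range_X (Nat.ne_of_gt hn.1)
  refine IsGreatest.csSup_eq ⟨⟨_, by simp, hmem, ?_⟩, ?_⟩
  · exact isRegular_quotient_of_le
      (sqIdeal_le_span_range_X fun h => hF.prop (h𝒩 (Finset.empty_subset _) h))
      isPrime_span_range_X.ne_top hmem
      (isWeaklyRegular_hsymm_quotient_sqIdeal h𝒩 1 hcard hY hW hYW)
  · rintro _ ⟨rs, rfl, hrs, h⟩
    exact length_le_card_of_isWeaklyRegular_quotient_sqIdeal h𝒩 hF hrs h.toIsWeaklyRegular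

end PolyDepth

/-! ### Squarefree powers -/

/-- The sets containing `k` pairwise disjoint members of `𝒢`; they record the squarefree monomials
of the `k`-th power of `sqIdeal K 𝒢`. -/
def matchingSets {σ : Type*} (𝒢 : Set (Finset σ)) (k : ℕ) : Set (Finset σ) :=
  {F | ∃ G : Fin k → Finset σ, (∀ i, G i ∈ 𝒢) ∧ Pairwise (Disjoint on G) ∧ ∀ i, G i ⊆ F}

section SqfreePower

variable {K : Type} [Field K] {σ : Type} {𝒢 : Set (Finset σ)}

theorem isUpperSet_matchingSets (𝒢 : Set (Finset σ)) (k : ℕ) : IsUpperSet (matchingSets 𝒢 k) :=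
  fun _ _ hFF' ⟨G, hG, hdisj, hGF⟩ => ⟨G, hG, hdisj, fun i => (hGF i).trans hFF'⟩

theorem sqMon_mem_sqIdeal_pow_of_mem_matchingSets {k : ℕ} {F : Finset σ}
    (hF : F ∈ matchingSets 𝒢 k) : sqMon K F ∈ sqIdeal K 𝒢 ^ k := by
  classical
  obtain ⟨G, hG, hdisj, hGF⟩ := hF
  have hprod : ∏ i, sqMon K (G i) = sqMon K (Finset.univ.biUnion G) :=
    (Finset.prod_biUnion fun i _ j _ h => hdisj h).symm
  have hmem := Ideal.prod_mem_prod (s := Finset.univ) (I := fun _ : Fin k => sqIdeal K 𝒢)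
    fun i _ => sqMon_mem_sqIdeal (hG i)
  rw [hprod, Finset.prod_const, Finset.card_univ, Fintype.card_fin] at hmem
  exact Ideal.mem_of_dvd _ (sqMon_dvd_sqMon (Finset.biUnion_subset.mpr fun i _ => hGF i)) hmem

theorem sqIdeal_pow_eq_span_monomial (𝒢 : Set (Finset σ)) (k : ℕ) :
    sqIdeal K 𝒢 ^ k = Ideal.span ((fun e => monomial e 1) ''
      {e | ∃ G : Fin k → Finset σ, (∀ i, G i ∈ 𝒢) ∧ ∑ i, ∑ j ∈ G i, Finsupp.single j 1 = e}) := by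
  rw [sqIdeal, Ideal.span, Submodule.span_pow]
  congr 1 with p
  simp only [Set.mem_pow_iff_prod, Set.mem_image, Set.mem_ofPred_eq]
  constructor
  · rintro ⟨f, hf, rfl⟩
    choose G hG hGf using hf
    exact ⟨_, ⟨G, hG, rfl⟩, by simp only [← hGf, sqMon_eq_monomial, monomial_sum_one]⟩
  · rintro ⟨_, ⟨G, hG, rfl⟩, rfl⟩
    exact ⟨_, fun i => ⟨G i, hG i, rfl⟩, by simp only [sqMon_eq_monomial, monomial_sum_one]⟩

theorem pairwise_disjoint_and_subset_of_sum_single_le {ι : Type*} [Fintype ι]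
    {G : ι → Finset σ} {F : Finset σ}
    (h : ∑ i, ∑ j ∈ G i, Finsupp.single j 1 ≤ (∑ j ∈ F, Finsupp.single j 1 : σ →₀ ℕ)) :
    Pairwise (Disjoint on G) ∧ ∀ i, G i ⊆ F := by
  classical
  have hcount (x : σ) : ({i | x ∈ G i} : Finset ι).card ≤ if x ∈ F then 1 else 0 := by
    have hx := h x
    rw [sum_single_one_apply, Finsupp.finsetSum_apply] at hx
    simpa only [sum_single_one_apply, ← Finset.card_filter] using hx
  refine ⟨fun i j hij => Finset.disjoint_left.mpr fun x hi hj => hij ?_, fun i x hi => ?_⟩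
  · refine Finset.card_le_one.mp ((hcount x).trans ?_) i (by simpa) j (by simpa)
    split_ifs <;> simp
  · by_contra hx
    have hzero := hcount x
    rw [if_neg hx, Nat.le_zero, Finset.card_eq_zero] at hzero
    exact Finset.notMem_empty i (hzero ▸ by simpa)

theorem sqMon_mem_sqIdeal_pow_iff (k : ℕ) (F : Finset σ) :
    sqMon K F ∈ sqIdeal K 𝒢 ^ k ↔ F ∈ matchingSets 𝒢 k := by
  classical
  refine ⟨fun h => ?_, sqMon_mem_sqIdeal_pow_of_mem_matchingSets⟩
  rw [sqIdeal_pow_eq_span_monomial, mem_ideal_span_monomial_image, sqMon_eq_monomial,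
    support_monomial, if_neg one_ne_zero] at h
  obtain ⟨_, ⟨G, hG, rfl⟩, hle⟩ := h _ (Finset.mem_singleton_self _)
  exact ⟨G, hG, pairwise_disjoint_and_subset_of_sum_single_le hle⟩

theorem sqfreePower_sqIdeal (𝒢 : Set (Finset σ)) (k : ℕ) :
    sqfreePower K (sqIdeal K 𝒢) k = sqIdeal K (matchingSets 𝒢 k) := by
  refine congrArg Ideal.span (Set.ext fun p => ⟨?_, ?_⟩)
  · rintro ⟨F, rfl, hF⟩
    exact ⟨F, (sqMon_mem_sqIdeal_pow_iff k F).mp hF, rfl⟩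
  · rintro ⟨F, hF, rfl⟩
    exact ⟨F, rfl, (sqMon_mem_sqIdeal_pow_iff k F).mpr hF⟩

theorem indeg_sqIdeal {𝒩 : Set (Finset σ)} (h𝒩 : IsUpperSet 𝒩) :
    indeg K (sqIdeal K 𝒩) = sInf (Finset.card '' 𝒩) := by
  simp only [indeg, sqMon_mem_sqIdeal_iff h𝒩]
  congr 1 with d
  exact exists_congr fun F => and_comm

theorem sqfreePower_sqIdeal_ne_bot_iff (𝒢 : Set (Finset σ)) (k : ℕ) :
    sqfreePower K (sqIdeal K 𝒢) k ≠ ⊥ ↔ (matchingSets 𝒢 k).Nonempty := by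
  rw [sqfreePower_sqIdeal]
  refine ⟨fun h => ?_, sqIdeal_ne_bot⟩
  contrapose! h
  rw [h, sqIdeal, Set.image_empty, Ideal.span_empty]

end SqfreePower

/-! ### Coloured sets -/

section Colouring

theorem exists_pairwiseDisjoint_superset_card_eq {ι σ : Type*} {I : Finset ι}
    {s : ι → ℕ} {C : ι → Finset σ} {S : Finset σ} (hC : (I : Set ι).PairwiseDisjoint C)
    (hCS : ∀ i ∈ I, C i ⊆ S) (hCs : ∀ i ∈ I, (C i).card ≤ s i) (hsum : ∑ i ∈ I, s i ≤ S.card) :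
    ∃ T : ι → Finset σ, (I : Set ι).PairwiseDisjoint T ∧
      ∀ i ∈ I, C i ⊆ T i ∧ T i ⊆ S ∧ (T i).card = s i := by
  classical
  induction I using Finset.induction_on generalizing S with
  | empty => exact ⟨C, by simp, by simp⟩
  | insert i I hi ih =>
    rw [Finset.sum_insert hi] at hsum
    rw [Finset.coe_insert, Set.pairwiseDisjoint_insert_of_notMem (by simpa)] at hC
    simp only [Finset.forall_mem_insert] at hCS hCs
    have hrest : (I.biUnion C).card ≤ ∑ j ∈ I, s j :=
      Finset.card_biUnion_le.trans (Finset.sum_le_sum hCs.2)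
    have havail := Finset.le_card_sdiff (I.biUnion C) S
    obtain ⟨T₀, hCT₀, hT₀, hT₀s⟩ := Finset.exists_subsuperset_card_eq
      (show C i ⊆ S \ I.biUnion C from Finset.subset_sdiff.mpr
        ⟨hCS.1, (Finset.disjoint_biUnion_right _ _ _).mpr hC.2⟩) hCs.1 (by omega)
    rw [Finset.subset_sdiff, Finset.disjoint_biUnion_right] at hT₀
    obtain ⟨T, hT, hTC⟩ := ih (S := S \ T₀) hC.1
      (fun j hj => Finset.subset_sdiff.mpr ⟨hCS.2 j hj, (hT₀.2 j hj).symm⟩) hCs.2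
      (by rw [Finset.card_sdiff_of_subset hT₀.1]; omega)
    have hupdate : ∀ j ∈ I, update T i T₀ j = T j := fun j hj =>
      update_of_ne (ne_of_mem_of_not_mem hj hi) _ _
    refine ⟨update T i T₀, ?_, ?_⟩
    · rw [Finset.coe_insert, Set.pairwiseDisjoint_insert_of_notMem (by simpa)]
      refine ⟨fun j hj l hl hjl => ?_, fun j hj => ?_⟩
      · rw [onFun, hupdate j hj, hupdate l hl]
        exact hT hj hl hjl
      · rw [update_self, hupdate j hj]
        exact Finset.disjoint_sdiff.mono_right (hTC j hj).2.1
    · rw [Finset.forall_mem_insert, update_self]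
      refine ⟨⟨hCT₀, hT₀.1, hT₀s⟩, fun j hj => ?_⟩
      rw [hupdate j hj]
      exact (hTC j hj).imp_right (And.imp_left (·.trans Finset.sdiff_subset))

theorem eq_range_or_sum_range_add_le_sum {s : ℕ → ℕ} {b : ℕ} (hs : ∀ i j, i < j → s i + b ≤ s j)
    (A : Finset ℕ) :
    A = Finset.range A.card ∨ ∑ j ∈ Finset.range A.card, s j + b ≤ ∑ j ∈ A, s j := by
  set R := Finset.range A.card with hR
  refine or_iff_not_imp_left.mpr fun hne => ?_
  have hcard : (A \ R).card = (R \ A).card := Finset.card_sdiff_comm (by simp [hR])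
  have hpos : 0 < (R \ A).card := by
    rw [← hcard, Finset.card_pos, Finset.sdiff_nonempty]
    exact fun h => hne (Finset.eq_of_subset_of_card_le h (by simp [hR]))
  have hmono : Monotone s := monotone_nat_of_le_succ fun j => by
    have := hs j (j + 1) (Nat.lt_succ_self j)
    omega
  have hsdiff : ∑ j ∈ R \ A, s j + b ≤ ∑ j ∈ A \ R, s j := calc
    ∑ j ∈ R \ A, s j + b ≤ ∑ j ∈ R \ A, (s j + b) := by
      rw [Finset.sum_add_distrib, Finset.sum_const, smul_eq_mul]
      gcongr
      exact Nat.le_mul_of_pos_left b hpos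
    _ ≤ (R \ A).card • s A.card := Finset.sum_le_card_nsmul _ _ _ fun j hj =>
      hs _ _ (by simpa [hR] using (Finset.mem_sdiff.mp hj).1)
    _ = (A \ R).card • s A.card := by rw [hcard]
    _ ≤ ∑ j ∈ A \ R, s j := Finset.card_nsmul_le_sum _ _ _ fun j hj =>
      hmono (by simpa [hR] using (Finset.mem_sdiff.mp hj).2)
  rw [← Finset.sum_inter_add_sum_sdiff A R s, ← Finset.sum_inter_add_sum_sdiff R A s,
    Finset.inter_comm R A]
  omega

/-- The sets which, for some colour `j < m`, contain the core `B j` of that colour and at least as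
many elements of `U` as its weight `s j`. -/
def colouredSets {σ : Type*} [DecidableEq σ] (m : ℕ) (s : ℕ → ℕ) (U : Finset σ)
    (B : ℕ → Finset σ) : Set (Finset σ) :=
  {G | ∃ j < m, B j ⊆ G ∧ s j ≤ (G ∩ U).card}

/-- Disjoint cores `B j` and weights `s j` for the colours `j < m`, where different weights differ
by at least `#Uᶜ` and `U` is so large that it is no obstacle to finding matchings. -/
structure IsColouring {σ : Type*} [Fintype σ] [DecidableEq σ] (m : ℕ) (s : ℕ → ℕ) (U : Finset σ)
    (B : ℕ → Finset σ) : Prop where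
  core_nonempty : ∀ j < m, (B j).Nonempty
  core_disjoint : (Set.Iio m).PairwiseDisjoint B
  card_core_inter_lt : ∀ j < m, (B j ∩ U).card < s j
  weight_add_le : ∀ i j, i < j → s i + Uᶜ.card ≤ s j
  card_compl_add_le : Uᶜ.card + 2 * ∑ j ∈ Finset.range m, s j ≤ U.card

variable {σ : Type*} [DecidableEq σ] {m k : ℕ} {s : ℕ → ℕ} {U F : Finset σ} {B : ℕ → Finset σ}

theorem exists_colours_of_mem_matchingSets (hB : ∀ j < m, (B j).Nonempty)
    (hF : F ∈ matchingSets (colouredSets m s U B) k) :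
    ∃ A ⊆ Finset.range m, A.card = k ∧ A.biUnion B ⊆ F ∧ ∑ j ∈ A, s j ≤ (F ∩ U).card := by
  obtain ⟨G, hG, hdisj, hGF⟩ := hF
  choose c hcm hcB hcs using hG
  have hinj : Injective c := fun i i' hii => by
    by_contra hne
    obtain ⟨x, hx⟩ := hB (c i) (hcm i)
    exact Finset.disjoint_left.mp (hdisj hne) (hcB i hx) (hcB i' (hii ▸ hx))
  refine ⟨Finset.univ.image c, ?_, ?_, ?_, ?_⟩
  · simpa [Finset.image_subset_iff] using hcm
  · rw [Finset.card_image_of_injective _ hinj, Finset.card_univ, Fintype.card_fin]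
  · simpa [Finset.biUnion_subset] using fun i => (hcB i).trans (hGF i)
  · calc ∑ j ∈ Finset.univ.image c, s j = ∑ i, s (c i) := Finset.sum_image hinj.injOn
      _ ≤ ∑ i, (G i ∩ U).card := Finset.sum_le_sum fun i _ => hcs i
      _ = (Finset.univ.biUnion fun i => G i ∩ U).card :=
        (Finset.card_biUnion fun i _ i' _ hii =>
          (hdisj hii).mono Finset.inter_subset_left Finset.inter_subset_left).symm
      _ ≤ (F ∩ U).card := Finset.card_le_card <| Finset.biUnion_subset.mpr fun i _ =>
        Finset.inter_subset_inter_right (hGF i)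

variable [Fintype σ]

namespace IsColouring

theorem pairwiseDisjoint_range (h : IsColouring m s U B) (hk : k ≤ m) :
    ((Finset.range k : Finset ℕ) : Set ℕ).PairwiseDisjoint B :=
  h.core_disjoint.subset fun _ hj => (Finset.mem_range.mp hj).trans_le hk

theorem sum_weight_le (h : IsColouring m s U B) (hk : k ≤ m) :
    Uᶜ.card + 2 * ∑ j ∈ Finset.range k, s j ≤ U.card := by
  have hle : ∑ j ∈ Finset.range k, s j ≤ ∑ j ∈ Finset.range m, s j :=
    Finset.sum_le_sum_of_subset (Finset.range_subset_range.mpr hk)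
  have := h.card_compl_add_le
  omega

theorem card_biUnion_inter_add_le (h : IsColouring m s U B) (hk : k ≤ m) :
    ((Finset.range k).biUnion B ∩ U).card + k ≤ ∑ j ∈ Finset.range k, s j := calc
  _ ≤ ∑ j ∈ Finset.range k, (B j ∩ U).card + k := by
    rw [Finset.biUnion_inter]
    gcongr
    exact Finset.card_biUnion_le
  _ = ∑ j ∈ Finset.range k, ((B j ∩ U).card + 1) := by simp [Finset.sum_add_distrib]
  _ ≤ _ := Finset.sum_le_sum fun j hj =>
    h.card_core_inter_lt j ((Finset.mem_range.mp hj).trans_le hk)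

theorem card_biUnion_sdiff (h : IsColouring m s U B) (hk : k ≤ m) :
    ((Finset.range k).biUnion B \ U).card = ∑ j ∈ Finset.range k, (B j \ U).card := by
  have hsdiff : (Finset.range k).biUnion B \ U = (Finset.range k).biUnion fun j => B j \ U := by
    ext x
    simp only [Finset.mem_sdiff, Finset.mem_biUnion]
    tauto
  rw [hsdiff, Finset.card_biUnion]
  exact fun i hi j hj hij => (h.pairwiseDisjoint_range hk hi hj hij).mono
    Finset.sdiff_subset Finset.sdiff_subset

theorem mem_matchingSets (h : IsColouring m s U B) (hk : k ≤ m)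
    (hBF : (Finset.range k).biUnion B ⊆ F) (hF : ∑ j ∈ Finset.range k, s j ≤ (F ∩ U).card) :
    F ∈ matchingSets (colouredSets m s U B) k := by
  rw [Finset.biUnion_subset] at hBF
  have hkm : ∀ j ∈ Finset.range k, j < m := fun j hj => (Finset.mem_range.mp hj).trans_le hk
  obtain ⟨T, hT, hBT⟩ := exists_pairwiseDisjoint_superset_card_eq (C := fun j => B j ∩ U)
    ((h.pairwiseDisjoint_range hk).mono fun _ => Finset.inter_subset_left)
    (fun j hj => Finset.inter_subset_inter_right (hBF j hj))
    (fun j hj => (h.card_core_inter_lt j (hkm j hj)).le) hF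
  have hTU : ∀ j ∈ Finset.range k, T j ⊆ U := fun j hj =>
    (hBT j hj).2.1.trans Finset.inter_subset_right
  have hmem (i : Fin k) : (i : ℕ) ∈ Finset.range k := Finset.mem_range.mpr i.2
  refine ⟨fun i => T i ∪ B i \ U, fun i => ⟨i, hkm i (hmem i), ?_, ?_⟩, fun i j hij => ?_,
    fun i => ?_⟩
  · calc B i = B i ∩ U ∪ B i \ U := (sup_inf_sdiff _ _).symm
      _ ⊆ T i ∪ B i \ U := Finset.union_subset_union_left (hBT i (hmem i)).1
  · rw [← (hBT i (hmem i)).2.2]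
    exact Finset.card_le_card (Finset.subset_inter Finset.subset_union_left (hTU i (hmem i)))
  · have hij' : (i : ℕ) ≠ j := Fin.val_ne_of_ne hij
    simp only [onFun, Finset.disjoint_union_left, Finset.disjoint_union_right]
    refine ⟨⟨hT (hmem i) (hmem j) hij', ?_⟩, ?_, ?_⟩
    · exact Finset.sdiff_disjoint.mono_right (hTU j (hmem j))
    · exact Finset.disjoint_sdiff.mono_left (hTU i (hmem i))
    · exact (h.pairwiseDisjoint_range hk (hmem i) (hmem j) hij').mono
        Finset.sdiff_subset Finset.sdiff_subset
  · exact Finset.union_subset ((hBT i (hmem i)).2.1.trans Finset.inter_subset_left)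
      (Finset.sdiff_subset.trans (hBF i (hmem i)))

theorem le_of_mem_matchingSets (h : IsColouring m s U B)
    (hF : F ∈ matchingSets (colouredSets m s U B) k) : k ≤ m := by
  obtain ⟨A, hAm, rfl, -⟩ := exists_colours_of_mem_matchingSets h.core_nonempty hF
  simpa using Finset.card_le_card hAm

theorem biUnion_subset_or_sum_add_le (h : IsColouring m s U B)
    (hF : F ∈ matchingSets (colouredSets m s U B) k) :
    (Finset.range k).biUnion B ⊆ F ∧ ∑ j ∈ Finset.range k, s j ≤ (F ∩ U).card ∨
      ∑ j ∈ Finset.range k, s j + Uᶜ.card ≤ (F ∩ U).card := by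
  obtain ⟨A, -, rfl, hAF, hA⟩ := exists_colours_of_mem_matchingSets h.core_nonempty hF
  obtain hrange | hlt := eq_range_or_sum_range_add_le_sum h.weight_add_le A
  · exact Or.inl ⟨hrange ▸ hAF, hrange ▸ hA⟩
  · exact Or.inr (hlt.trans hA)

theorem sum_le_card_inter (h : IsColouring m s U B)
    (hF : F ∈ matchingSets (colouredSets m s U B) k) :
    ∑ j ∈ Finset.range k, s j ≤ (F ∩ U).card :=
  (h.biUnion_subset_or_sum_add_le hF).elim And.right (Nat.le_add_right _ _).trans

theorem sum_add_le_card_of_not_subset (h : IsColouring m s U B)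
    (hF : F ∈ matchingSets (colouredSets m s U B) k) (hBF : ¬(Finset.range k).biUnion B ⊆ F) :
    ∑ j ∈ Finset.range k, s j + Uᶜ.card ≤ F.card :=
  ((h.biUnion_subset_or_sum_add_le hF).resolve_left (hBF ∘ And.left)).trans
    (Finset.card_le_card Finset.inter_subset_left)

theorem sInf_card_matchingSets (h : IsColouring m s U B) (hk : k ≤ m) :
    sInf (Finset.card '' matchingSets (colouredSets m s U B) k) =
      ∑ j ∈ Finset.range k, s j + ((Finset.range k).biUnion B \ U).card := by
  set Y := (Finset.range k).biUnion B
  have hYU : (Y ∩ U).card + k ≤ ∑ j ∈ Finset.range k, s j := h.card_biUnion_inter_add_le hk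
  have hsU := h.sum_weight_le hk
  refine IsLeast.csInf_eq ⟨?_, ?_⟩
  · obtain ⟨P, hYP, hPU, hP⟩ := Finset.exists_subsuperset_card_eq
      (Finset.inter_subset_right : Y ∩ U ⊆ U) (n := ∑ j ∈ Finset.range k, s j)
      (by omega) (by omega)
    refine ⟨P ∪ Y \ U, h.mem_matchingSets hk ?_ ?_, ?_⟩
    · calc Y = Y ∩ U ∪ Y \ U := (sup_inf_sdiff _ _).symm
        _ ⊆ P ∪ Y \ U := Finset.union_subset_union_left hYP
    · rw [← hP]
      exact Finset.card_le_card (Finset.subset_inter Finset.subset_union_left hPU)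
    · rw [Finset.card_union_of_disjoint (Finset.disjoint_sdiff.mono_left hPU), hP]
  · rintro _ ⟨F, hF, rfl⟩
    by_cases hYF : Y ⊆ F
    · rw [← Finset.card_inter_add_card_sdiff F U]
      exact Nat.add_le_add (h.sum_le_card_inter hF)
        (Finset.card_le_card (Finset.sdiff_subset_sdiff hYF subset_rfl))
    · refine le_trans ?_ (h.sum_add_le_card_of_not_subset hF hYF)
      gcongr
      exact Finset.sdiff_disjoint.le_compl_right

theorem maximal_notMem_matchingSets (h : IsColouring m s U B) (hk : k ≤ m) {P : Finset σ}
    (hBP : (Finset.range k).biUnion B ∩ U ⊆ P) (hPU : P ⊆ U)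
    (hP : P.card + 1 = ∑ j ∈ Finset.range k, s j) :
    Maximal (· ∉ matchingSets (colouredSets m s U B) k) (Uᶜ ∪ P) := by
  refine ⟨fun hmem => ?_, fun F hF hle => ?_⟩
  · have hcard := h.sum_le_card_inter hmem
    have hinter : (Uᶜ ∪ P) ∩ U = P := by
      rw [Finset.union_inter_distrib_right, Finset.inter_comm Uᶜ, Finset.inter_compl,
        Finset.empty_union, Finset.inter_eq_left.mpr hPU]
    rw [hinter] at hcard
    omega
  · intro x hx
    by_contra hxP
    obtain ⟨hxU, hxP⟩ : x ∈ U ∧ x ∉ P := by simpa [not_or] using hxP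
    refine hF (h.mem_matchingSets hk (fun y hy => hle ?_) ?_)
    · by_cases hyU : y ∈ U
      · exact Finset.mem_union_right _ (hBP (Finset.mem_inter.mpr ⟨hy, hyU⟩))
      · exact Finset.mem_union_left _ (Finset.mem_compl.mpr hyU)
    · rw [← hP, ← Finset.card_insert_of_notMem hxP]
      refine Finset.card_le_card (Finset.insert_subset (Finset.mem_inter.mpr ⟨hx, hxU⟩) ?_)
      exact Finset.subset_inter (Finset.subset_union_right.trans hle) hPU

end IsColouring

theorem exists_isColouring_card_sdiff_eq {v : ℕ → ℕ} (hs : ∀ j < m, 1 < s j)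
    (hgap : ∀ i j, i < j → s i + Uᶜ.card ≤ s j)
    (hlarge : Uᶜ.card + 2 * ∑ j ∈ Finset.range m, s j ≤ U.card)
    (hv : ∑ j ∈ Finset.range m, v j ≤ Uᶜ.card) :
    ∃ B, IsColouring m s U B ∧ ∀ j < m, (B j \ U).card = v j := by
  have hmU : ∑ _j ∈ Finset.range m, 1 ≤ U.card :=
    (Finset.sum_le_sum fun j hj => (hs j (Finset.mem_range.mp hj)).le).trans (by omega)
  have hempty : ((Finset.range m : Finset ℕ) : Set ℕ).PairwiseDisjoint fun _ => (∅ : Finset σ) :=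
    fun _ _ _ _ _ => Finset.disjoint_empty_left _
  obtain ⟨V, hV, hVU⟩ := exists_pairwiseDisjoint_superset_card_eq hempty (by simp) (by simp) hv
  obtain ⟨P, hP, hPU⟩ := exists_pairwiseDisjoint_superset_card_eq hempty (by simp) (by simp) hmU
  simp only [Finset.empty_subset, true_and, Finset.mem_range] at hVU hPU
  have hPV {i j : ℕ} (hi : i < m) (hj : j < m) : Disjoint (P i) (V j) :=
    disjoint_compl_right.mono (hPU i hi).1 (hVU j hj).1
  have hinter : ∀ j < m, (P j ∪ V j) ∩ U = P j := fun j hj => by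
    rw [Finset.union_inter_distrib_right, Finset.inter_eq_left.mpr (hPU j hj).1,
      Finset.disjoint_iff_inter_eq_empty.mp (disjoint_compl_left.mono_left (hVU j hj).1),
      Finset.union_empty]
  refine ⟨fun j => P j ∪ V j, ⟨fun j hj => ?_, fun i hi j hj hij => ?_, fun j hj => ?_, hgap,
    hlarge⟩, fun j hj => ?_⟩
  · exact (Finset.card_pos.mp (by rw [(hPU j hj).2]; exact one_pos)).inl
  · simp only [Set.mem_Iio] at hi hj
    simp only [onFun, Finset.disjoint_union_left, Finset.disjoint_union_right]
    exact ⟨⟨hP (by simpa) (by simpa) hij, hPV hj hi |>.symm⟩,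
      hPV hi hj, hV (by simpa) (by simpa) hij⟩
  · rw [hinter j hj, (hPU j hj).2]
    exact hs j hj
  · rw [← (hVU j hj).2]
    congr 1
    rw [Finset.union_sdiff_distrib, Finset.sdiff_eq_empty_iff_subset.mpr (hPU j hj).1,
      Finset.empty_union,
      Finset.sdiff_eq_self_of_disjoint (disjoint_compl_left.mono_left (hVU j hj).1)]

theorem exists_fin_isColouring {v : ℕ → ℕ} {r : ℕ} (hv : ∑ j ∈ Finset.range m, v j ≤ r) :
    ∃ (n : ℕ) (s : ℕ → ℕ) (U : Finset (Fin n)) (B : ℕ → Finset (Fin n)),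
      IsColouring m s U B ∧ Uᶜ.card = r ∧ ∀ j < m, (B j \ U).card = v j := by
  let s (j : ℕ) : ℕ := r * j + 2
  let N : ℕ := r + 2 * ∑ j ∈ Finset.range m, s j
  obtain ⟨U, -, hU⟩ := Finset.exists_subset_card_eq (s := (Finset.univ : Finset (Fin (r + N))))
    (n := N) (by simp)
  have hUc : Uᶜ.card = r := by simp [Finset.card_compl, hU]
  have hgap (i j : ℕ) (hij : i < j) : s i + Uᶜ.card ≤ s j := by
    have hmul : r * (i + 1) ≤ r * j := Nat.mul_le_mul_left r hij
    simp only [s, hUc]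
    linarith
  obtain ⟨B, hB, hBv⟩ := exists_isColouring_card_sdiff_eq (fun j _ => by simp [s]) hgap
    (by rw [hUc, hU]) (hv.trans_eq hUc.symm)
  exact ⟨r + N, s, U, B, hB, hUc, hBv⟩

end Colouring

section Invariants

variable {σ : Type} [Fintype σ] [DecidableEq σ] {m k : ℕ} {s : ℕ → ℕ} {U : Finset σ}
  {B : ℕ → Finset σ} (K : Type) [Field K]

namespace IsColouring

theorem monGrade_eq (h : IsColouring m s U B) :
    monGrade K (sqIdeal K (colouredSets m s U B)) = m := by
  simp only [monGrade, sqfreePower_sqIdeal_ne_bot_iff]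
  refine IsGreatest.csSup_eq ⟨⟨Finset.univ, ?_⟩, fun k ⟨F, hF⟩ => h.le_of_mem_matchingSets hF⟩
  have hlarge := h.card_compl_add_le
  refine h.mem_matchingSets le_rfl (Finset.subset_univ _) ?_
  rw [Finset.univ_inter]
  omega

theorem indeg_eq (h : IsColouring m s U B) (hk : k ≤ m) :
    indeg K (sqfreePower K (sqIdeal K (colouredSets m s U B)) k) =
      ∑ j ∈ Finset.range k, s j + ∑ j ∈ Finset.range k, (B j \ U).card := by
  rw [sqfreePower_sqIdeal, indeg_sqIdeal (isUpperSet_matchingSets _ k),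
    h.sInf_card_matchingSets hk, h.card_biUnion_sdiff hk]

theorem polyDepth_add_one_eq (h : IsColouring m s U B) (hk : k ≤ m) (hk₀ : 0 < k) :
    polyDepth K (sqfreePower K (sqIdeal K (colouredSets m s U B)) k) + 1 =
      Uᶜ.card + ∑ j ∈ Finset.range k, s j := by
  set Y := (Finset.range k).biUnion B
  have hYU : (Y ∩ U).card + k ≤ ∑ j ∈ Finset.range k, s j := h.card_biUnion_inter_add_le hk
  have hsU := h.sum_weight_le hk
  obtain ⟨P, hYP, hPU, hP⟩ := Finset.exists_subsuperset_card_eq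
    (Finset.inter_subset_right : Y ∩ U ⊆ U) (n := ∑ j ∈ Finset.range k, s j - 1)
    (by omega) (by omega)
  have hfacet : (Uᶜ ∪ P).card + 1 = Uᶜ.card + ∑ j ∈ Finset.range k, s j := by
    rw [Finset.card_union_of_disjoint (disjoint_compl_left.mono_right hPU), hP]
    omega
  rw [sqfreePower_sqIdeal, polyDepth_sqIdeal (Y := Y) (W := Uᶜ) (isUpperSet_matchingSets _ k)
    (h.maximal_notMem_matchingSets hk hYP hPU (by omega)), hfacet]
  · have hYc : (Y \ U).card ≤ Uᶜ.card :=
      Finset.card_le_card Finset.sdiff_disjoint.le_compl_right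
    have hYcard := Finset.card_inter_add_card_sdiff Y U
    have hUcard := Finset.card_add_card_compl U
    omega
  · intro G hG hYG
    have hGcard := h.sum_add_le_card_of_not_subset hG hYG
    omega
  · intro G hYG hG
    have hinter : (G ∪ Uᶜ) ∩ U = G ∩ U := by
      rw [Finset.union_inter_distrib_right, Finset.inter_comm Uᶜ, Finset.inter_compl,
        Finset.union_empty]
    exact h.mem_matchingSets hk hYG (hinter ▸ h.sum_le_card_inter hG)
  · intro G hG hYG
    have hGU := h.sum_le_card_inter hG
    have hUG : Uᶜ.card ≤ (G \ U).card := Finset.card_le_card fun x hx =>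
      Finset.mem_sdiff.mpr ⟨hYG (Finset.mem_union_right _ hx), Finset.mem_compl.mp hx⟩
    have hGcard := Finset.card_inter_add_card_sdiff G U
    omega

theorem nDepth_add_sum_eq (h : IsColouring m s U B) (hk : k ≤ m) (hk₀ : 0 < k) :
    nDepth K (sqIdeal K (colouredSets m s U B)) k + ∑ j ∈ Finset.range k, (B j \ U).card =
      Uᶜ.card := by
  have hdepth := h.polyDepth_add_one_eq K hk hk₀
  rw [nDepth, h.indeg_eq K hk]
  omega

end IsColouring

end Invariants

theorem sum_range_tsub_succ_add {α : Type*} [AddCommMonoid α] [PartialOrder α] [Sub α]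
    [OrderedSub α] [CanonicallyOrderedAdd α] {c : ℕ → α} {k : ℕ}
    (hc : ∀ j < k, c (j + 1) ≤ c j) :
    ∑ j ∈ Finset.range k, (c j - c (j + 1)) + c k = c 0 := by
  induction k with
  | zero => simp
  | succ k ih =>
    rw [Finset.sum_range_succ, add_assoc, tsub_add_cancel_of_le (hc k k.lt_succ_self),
      ih fun j hj => hc j (hj.trans k.lt_succ_self)]

/-- **Theorem 4.1.** Any non-increasing sequence `a₁ ≥ a₂ ≥ … ≥ a_m` of non-negative
integers is the normalized depth function of some squarefree monomial ideal
`I ⊆ K[x₁,…,xₙ]` with `ν(I) = m`. -/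
theorem any_nonincreasing_is_normalized_depth (K : Type) [Field K]
    (m : ℕ) (hm : 1 ≤ m) (a : ℕ → ℕ)
    (ha : ∀ k : ℕ, 1 ≤ k → k < m → a (k + 1) ≤ a k) :
    ∃ (n : ℕ) (I : Ideal (MvPolynomial (Fin n) K)),
      IsSqfreeMonomialIdeal K I ∧ monGrade K I = m ∧
      ∀ k : ℕ, 1 ≤ k → k ≤ m → nDepth K I k = (a k : ℤ) := by
  let c (j : ℕ) : ℕ := a (max 1 j)
  have hc : ∀ j < m, c (j + 1) ≤ c j := by
    rintro (_ | j) hj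
    · exact le_rfl
    · simpa [c] using ha (j + 1) j.succ_pos hj
  have hsum {k : ℕ} (hk : k ≤ m) : ∑ j ∈ Finset.range k, (c j - c (j + 1)) + c k = a 1 :=
    sum_range_tsub_succ_add fun j hj => hc j (hj.trans_le hk)
  obtain ⟨n, s, U, B, hB, hU, hBv⟩ :=
    exists_fin_isColouring ((Nat.le_add_right _ _).trans_eq (hsum le_rfl))
  refine ⟨n, sqIdeal K (colouredSets m s U B), ⟨_, rfl⟩, hB.monGrade_eq K,
    fun k hk₁ hk => ?_⟩
  have hdepth := hB.nDepth_add_sum_eq K hk hk₁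
  have hck : c k = a k := by simp [c, hk₁]
  rw [Finset.sum_congr rfl fun j hj => hBv j ((Finset.mem_range.mp hj).trans_le hk), hU] at hdepth
  have hsum_k := hsum hk
  rw [hck] at hsum_k
  omega
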